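/- arXiv:2311.12178 — 7 statements merged into one kernel-verified Lean document; each statement's English description precedes it below -/
import Mathlib

section
/- Let (L,[-,-]) be a Leibniz algebra over a field K. Then the trilinear bracket {x,y,z} := [x,[y,z]] makes L into a ternary Leibniz algebra, i.e. {{x,y,z},t,u} = {x,y,{z,t,u}} + {x,{y,t,u},z} + {{x,t,u},y,z} for all x,y,z,t,u ∈ L. -/
variable {K : Type*} [Field K] {L : Type*} [AddCommGroup L] [Module K L]

/-- The (right) Leibniz identity for a binary bracket. -/
def LeibnizId (b : L → L → L) : Prop :=
  ∀ x y z : L, b (b x y) z = b x (b y z) + b (b x z) y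

/-- The (right) ternary Leibniz identity for a ternary bracket. -/
def TernaryLeibnizId (b : L → L → L → L) : Prop :=
  ∀ x y z t u : L,
    b (b x y z) t u = b x y (b z t u) + b x (b y t u) z + b (b x t u) y z

/-- `D` is a derivation of the binary bracket `b`. The right Leibniz identity says that every right
multiplication `b · z` is one. The summand differentiating the last argument comes first, as in
`LeibnizId`. -/
def IsBracketDerivation {M : Type*} [Add M] (b : M → M → M) (D : M → M) : Prop :=
  ∀ x y : M, D (b x y) = b x (D y) + b (D x) y

/-- `D` is a derivation of the ternary bracket `b`. The right ternary Leibniz identity says that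
every right multiplication `b · t u` is one. The summands are ordered as in `TernaryLeibnizId`. -/
def IsTernaryBracketDerivation {M : Type*} [Add M] (b : M → M → M → M) (D : M → M) : Prop :=
  ∀ x y z : M, D (b x y z) = b x y (D z) + b x (D y) z + b (D x) y z

theorem IsBracketDerivation.isTernaryBracketDerivation {M : Type*} [AddZeroClass M]
    {b : M → M →+ M} {D : M → M} (hD : IsBracketDerivation (fun x y => b x y) D) :
    IsTernaryBracketDerivation (fun x y z => b x (b y z)) D := fun x y z =>
  calc
    D (b x (b y z)) = b x (D (b y z)) + b (D x) (b y z) := hD x (b y z)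
    _ = b x (b y (D z) + b (D y) z) + b (D x) (b y z) := by rw [hD y z]
    _ = b x (b y (D z)) + b x (b (D y) z) + b (D x) (b y z) := by rw [map_add]

theorem LeibnizId.isBracketDerivation_right {b : L → L → L} (hb : LeibnizId b) (z : L) :
    IsBracketDerivation b (b · z) :=
  fun x y => hb x y z

-- Right multiplication by `(t, u)` for the ternary bracket is right multiplication by `b t u`.
theorem leibniz_to_ternaryLeibniz_general (b : L → L →+ L)
    (hb : LeibnizId fun x y => b x y) :
    TernaryLeibnizId fun x y z : L => b x (b y z) :=
  fun x y z t u => (hb.isBracketDerivation_right (b t u)).isTernaryBracketDerivation x y z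

/-- Let `(L, [-,-])` be a Leibniz algebra over a field `K`. Then the trilinear bracket
`{x,y,z} := [x,[y,z]]` makes `L` into a ternary Leibniz algebra. -/
theorem leibniz_to_ternaryLeibniz (b : L →ₗ[K] L →ₗ[K] L)
    (hb : LeibnizId fun x y => b x y) :
    TernaryLeibnizId fun x y z : L => b x (b y z) := by
  exact leibniz_to_ternaryLeibniz_general (fun x => (b x).toAddMonoidHom) hb
end

section
/- Let (L,[-,-]) be a Leibniz algebra over a field K and let β₁, β₂ : L → L be two injective averaging operators on L that commute (β₁∘β₂ = β₂∘β₁) and are compatible, i.e. [β₂([β₁(x),y]),z] + [β₁([β₂(x),y]),z] = [[β₁(x),β₂(y)],z] + [[β₂(x),β₁(y)],z] for all x,y,z ∈ L. Then the brackets [x,y]_{β₁} := [β₁(x),y] and [x,y]_{β₂} := [β₂(x),y] are two compatible Leibniz brackets on L. -/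
variable {K : Type*} [Field K] {L : Type*} [AddCommGroup L] [Module K L]

/-- Compatibility of two binary brackets. -/
def LeibnizCompat (b₁ b₂ : L → L → L) : Prop :=
  ∀ x y z : L,
    b₂ (b₁ x y) z + b₁ (b₂ x y) z =
      b₂ x (b₁ y z) + b₁ x (b₂ y z) + b₂ (b₁ x z) y + b₁ (b₂ x z) y

/-- An averaging operator on a Leibniz algebra:
`β([β(x),y]) = [β(x),β(y)] = β([x,β(y)])`. -/
def IsAveraging (b : L → L → L) (β : L → L) : Prop :=
  ∀ x y : L, β (b (β x) y) = b (β x) (β y) ∧ β (b x (β y)) = b (β x) (β y)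

/-!
Cancelling an injective `β` in `β [x, β y] = [β x, β y] = β [β x, y]` gives `[x, β y] = [β x, y]`.
Each identity then comes from the Leibniz rule for `[-,-]`: the averaging identity, respectively the
compatibility of `β₁` and `β₂`, moves the operator inside the inner bracket on the left-hand side,
and `[x, β y] = [β x, y]` moves it back in the last terms on the right-hand side.
-/

theorem IsAveraging.bracket_apply_right {M : Type*} {b : M → M → M} {β : M → M}
    (hav : IsAveraging b β) (hinj : Function.Injective β) (x y : M) : b x (β y) = b (β x) y :=
  hinj ((hav x y).2.trans (hav x y).1.symm)

theorem LeibnizId.comp_left {b : L → L → L} {β : L → L} (hb : LeibnizId b)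
    (hav : IsAveraging b β) (hβ : ∀ x y, b x (β y) = b (β x) y) :
    LeibnizId fun x y => b (β x) y := fun x y z =>
  calc b (β (b (β x) y)) z
    _ = b (b (β x) (β y)) z := by rw [(hav x y).1]
    _ = b (β x) (b (β y) z) + b (b (β x) z) (β y) := hb _ _ _
    _ = b (β x) (b (β y) z) + b (β (b (β x) z)) y := by rw [hβ]

theorem LeibnizId.leibnizCompat_comp_left {b : L → L → L} {β₁ β₂ : L → L} (hb : LeibnizId b)
    (hβ₁ : ∀ x y, b x (β₁ y) = b (β₁ x) y) (hβ₂ : ∀ x y, b x (β₂ y) = b (β₂ x) y)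
    (hcompat : ∀ x y z : L,
      b (β₂ (b (β₁ x) y)) z + b (β₁ (b (β₂ x) y)) z =
        b (b (β₁ x) (β₂ y)) z + b (b (β₂ x) (β₁ y)) z) :
    LeibnizCompat (fun x y => b (β₁ x) y) (fun x y => b (β₂ x) y) := fun x y z =>
  calc b (β₂ (b (β₁ x) y)) z + b (β₁ (b (β₂ x) y)) z
    _ = b (b (β₁ x) (β₂ y)) z + b (b (β₂ x) (β₁ y)) z := hcompat x y z
    _ = (b (β₁ x) (b (β₂ y) z) + b (b (β₁ x) z) (β₂ y)) +
          (b (β₂ x) (b (β₁ y) z) + b (b (β₂ x) z) (β₁ y)) :=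
      congrArg₂ (· + ·) (hb _ _ _) (hb _ _ _)
    _ = (b (β₁ x) (b (β₂ y) z) + b (β₂ (b (β₁ x) z)) y) +
          (b (β₂ x) (b (β₁ y) z) + b (β₁ (b (β₂ x) z)) y) := by
      rw [hβ₂ (b (β₁ x) z), hβ₁ (b (β₂ x) z)]
    _ = b (β₂ x) (b (β₁ y) z) + b (β₁ x) (b (β₂ y) z) +
          b (β₂ (b (β₁ x) z)) y + b (β₁ (b (β₂ x) z)) y := by abel

theorem averaging_compatible_leibniz_general {b : L → L → L} (hb : LeibnizId b) {β₁ β₂ : L → L}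
    (hinj₁ : Function.Injective β₁) (hinj₂ : Function.Injective β₂)
    (hav₁ : IsAveraging b β₁) (hav₂ : IsAveraging b β₂)
    (hcompat : ∀ x y z : L,
      b (β₂ (b (β₁ x) y)) z + b (β₁ (b (β₂ x) y)) z =
        b (b (β₁ x) (β₂ y)) z + b (b (β₂ x) (β₁ y)) z) :
    LeibnizId (fun x y => b (β₁ x) y) ∧ LeibnizId (fun x y => b (β₂ x) y) ∧
      LeibnizCompat (fun x y => b (β₁ x) y) (fun x y => b (β₂ x) y) :=
  have hβ₁ := hav₁.bracket_apply_right hinj₁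
  have hβ₂ := hav₂.bracket_apply_right hinj₂
  ⟨hb.comp_left hav₁ hβ₁, hb.comp_left hav₂ hβ₂, hb.leibnizCompat_comp_left hβ₁ hβ₂ hcompat⟩

/-- Two compatible commuting injective averaging operators `β₁, β₂` on a Leibniz algebra
`(L,[-,-])` give two compatible Leibniz brackets `[x,y]_{βᵢ} := [βᵢ(x),y]`. -/
theorem averaging_compatible_leibniz (b : L →ₗ[K] L →ₗ[K] L)
    (hb : LeibnizId fun x y => b x y)
    (β₁ β₂ : L →ₗ[K] L)
    (hinj₁ : Function.Injective β₁) (hinj₂ : Function.Injective β₂)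
    (hcomm : β₁ ∘ₗ β₂ = β₂ ∘ₗ β₁)
    (hav₁ : IsAveraging (fun x y => b x y) β₁)
    (hav₂ : IsAveraging (fun x y => b x y) β₂)
    (hcompat : ∀ x y z : L,
      b (β₂ (b (β₁ x) y)) z + b (β₁ (b (β₂ x) y)) z =
        b (b (β₁ x) (β₂ y)) z + b (b (β₂ x) (β₁ y)) z) :
    LeibnizId (fun x y => b (β₁ x) y) ∧ LeibnizId (fun x y => b (β₂ x) y) ∧
      LeibnizCompat (fun x y => b (β₁ x) y) (fun x y => b (β₂ x) y) := by
  exact averaging_compatible_leibniz_general hb hinj₁ hinj₂ hav₁ hav₂ hcompat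
end

section
/- Let (L,[-,-]) be a Leibniz algebra over a field K, R : L → L a Rota-Baxter operator of weight 0, (M,l,r) a bimodule over L, and R_M : M → M a linear map such that l(R(x),R_M(m)) = R_M(l(R(x),m) + l(x,R_M(m))) and r(R_M(m),R(x)) = R_M(r(R_M(m),x) + r(m,R(x))) for all x ∈ L, m ∈ M. Define l'(x,m) := l(R(x),m) + l(x,R_M(m)) and r'(m,x) := r(R_M(m),x) + r(m,R(x)). Then (M,l',r') is a bimodule over the Leibniz algebra (L,[-,-]_R), where [x,y]_R := [R(x),y] + [x,R(y)]. -/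
variable {K : Type*} [Field K] {L : Type*} [AddCommGroup L] [Module K L]
variable {M : Type*} [AddCommGroup M] [Module K M]

/-- A bimodule `(M, l, r)` over a Leibniz algebra `(L, b)`. -/
def IsLeibnizBimodule (b : L → L → L) (l : L → M → M) (r : M → L → M) : Prop :=
  (∀ (x y : L) (m : M), l (b x y) m = l x (l y m) + r (l x m) y) ∧
  (∀ (x y : L) (m : M), r (l x m) y = l x (r m y) + l (b x y) m) ∧
  (∀ (x y : L) (m : M), r (r m x) y = r m (b x y) + r (r m y) x)

/-!
Suppose each product `μ` satisfies `μ(Pa, Qb) = S(μ(Pa, b) + μ(a, Qb))`, and write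
`μ'(a, b) = μ(Pa, b) + μ(a, Qb)`. Then a nested product such as `ν'(μ'(a, b), c)` is the sum of
the three terms obtained from `ν(μ(a, b), c)` by applying the operators to two of the three
arguments. Hence every identity between nested products which is linear in each argument passes
from the original products to the derived ones, and the bimodule axioms are of this kind.
-/

section RotaBaxterProduct

variable {A B C D E : Type*}

/-- The product `(a, b) ↦ μ(Pa, b) + μ(a, Qb)` derived from a product `μ : A × B → C` and operators
`P` on `A` and `Q` on `B`. The bracket `[-,-]_R` and the actions `l'` and `r'` are all of this form,
which is why the two factors may lie in different spaces. -/
def rotaBaxterProduct [Add C] (P : A → A) (Q : B → B) (μ : A → B → C) (a : A) (b : B) : C :=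
  μ (P a) b + μ a (Q b)

/-- The Rota-Baxter relation of weight `0` for a product `μ : A × B → C` and operators `P`, `Q`, `S`
on `A`, `B`, `C`. It covers both Rota-Baxter operators on an algebra and the compatibility of such
an operator with an operator on a bimodule. -/
def IsRotaBaxter [Add C] (P : A → A) (Q : B → B) (S : C → C) (μ : A → B → C) : Prop :=
  ∀ a b, μ (P a) (Q b) = S (rotaBaxterProduct P Q μ a b)

/-- The sum of the three values of `t` obtained by applying the operators `P`, `Q`, `S` to two of
the three arguments; it expresses nested Rota-Baxter products through the original ones. -/
def sumTwoOfThree [Add D] (P : A → A) (Q : B → B) (S : C → C) (t : A → B → C → D)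
    (a : A) (b : B) (c : C) : D :=
  t (P a) (Q b) c + t (P a) b (S c) + t a (Q b) (S c)

theorem sumTwoOfThree_eq_add_swap [AddCommMonoid D] {P : A → A} {Q : B → B} {S : C → C}
    {t u : A → B → C → D} {v : A → C → B → D} (h : ∀ a b c, t a b c = u a b c + v a c b)
    (a : A) (b : B) (c : C) :
    sumTwoOfThree P Q S t a b c = sumTwoOfThree P Q S u a b c + sumTwoOfThree P S Q v a c b := by
  simp only [sumTwoOfThree, h]
  abel

variable {k : Type*} [CommSemiring k] [AddCommMonoid C] [Module k C] [AddCommMonoid E] [Module k E]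

theorem rotaBaxterProduct_rotaBaxterProduct_left [AddCommMonoid D] [Module k D]
    {P : A → A} {Q : B → B} {S : C → C} {μ : A → B → C} (hμ : IsRotaBaxter P Q S μ)
    (T : D → D) (ν : C →ₗ[k] D →ₗ[k] E) (a : A) (b : B) (d : D) :
    rotaBaxterProduct S T (fun c d => ν c d) (rotaBaxterProduct P Q μ a b) d =
      sumTwoOfThree P Q T (fun a b d => ν (μ a b) d) a b d :=
  calc
    _ = ν (μ (P a) (Q b)) d + ν (μ (P a) b + μ a (Q b)) (T d) := by
      rw [hμ a b]; rfl
    _ = _ := by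
      rw [map_add, LinearMap.add_apply, ← add_assoc]; rfl

theorem rotaBaxterProduct_rotaBaxterProduct_right [AddCommMonoid D] [Module k D]
    {P : A → A} {Q : B → B} {S : C → C} {μ : A → B → C} (hμ : IsRotaBaxter P Q S μ)
    (T : D → D) (ν : D →ₗ[k] C →ₗ[k] E) (d : D) (a : A) (b : B) :
    rotaBaxterProduct T S (fun d c => ν d c) d (rotaBaxterProduct P Q μ a b) =
      sumTwoOfThree T P Q (fun d a b => ν d (μ a b)) d a b :=
  calc
    _ = ν (T d) (μ (P a) b + μ a (Q b)) + ν d (μ (P a) (Q b)) := by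
      rw [hμ a b]; rfl
    _ = _ := by
      rw [map_add]; rfl

end RotaBaxterProduct

theorem rotaBaxter_bimodule_general {k : Type*} [CommSemiring k] [Module k L] [Module k M]
    (b : L → L → L) (R : L → L) (hR : IsRotaBaxter R R R b)
    (l : L →ₗ[k] M →ₗ[k] M) (r : M →ₗ[k] L →ₗ[k] M)
    (hmod : IsLeibnizBimodule b (fun x m => l x m) (fun m x => r m x))
    (RM : M → M) (hl : IsRotaBaxter R RM RM fun x m => l x m)
    (hr : IsRotaBaxter RM R RM fun m x => r m x) :
    IsLeibnizBimodule (rotaBaxterProduct R R b) (rotaBaxterProduct R RM fun x m => l x m)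
      (rotaBaxterProduct RM R fun m x => r m x) := by
  obtain ⟨left_bracket, right_left, right_right⟩ := hmod
  refine ⟨fun x y m => ?_, fun x y m => ?_, fun x y m => ?_⟩
  · rw [rotaBaxterProduct_rotaBaxterProduct_left hR, rotaBaxterProduct_rotaBaxterProduct_right hl,
      rotaBaxterProduct_rotaBaxterProduct_left hl]
    exact sumTwoOfThree_eq_add_swap left_bracket x y m
  · rw [rotaBaxterProduct_rotaBaxterProduct_left hl, rotaBaxterProduct_rotaBaxterProduct_right hr,
      rotaBaxterProduct_rotaBaxterProduct_left hR]
    exact sumTwoOfThree_eq_add_swap (fun x m y => right_left x y m) x m y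
  · rw [rotaBaxterProduct_rotaBaxterProduct_left hr, rotaBaxterProduct_rotaBaxterProduct_right hR,
      rotaBaxterProduct_rotaBaxterProduct_left hr]
    exact sumTwoOfThree_eq_add_swap (fun m x y => right_right x y m) m x y

/-- A Rota-Baxter bimodule `(M, l, r, R_M)` over a Rota-Baxter Leibniz algebra `(L, [-,-], R)`
of weight `0` gives rise to a bimodule `(M, l', r')` over the Leibniz algebra `(L, [-,-]_R)`,
where `l'(x,m) := l(R(x),m) + l(x,R_M(m))`, `r'(m,x) := r(R_M(m),x) + r(m,R(x))` and
`[x,y]_R := [R(x),y] + [x,R(y)]`. -/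
theorem rotaBaxter_bimodule (b : L →ₗ[K] L →ₗ[K] L)
    (hb : LeibnizId fun x y => b x y)
    (R : L →ₗ[K] L)
    (hR : ∀ x y : L, b (R x) (R y) = R (b (R x) y + b x (R y)))
    (l : L →ₗ[K] M →ₗ[K] M) (r : M →ₗ[K] L →ₗ[K] M)
    (hmod : IsLeibnizBimodule (fun x y => b x y)
      (fun x m => l x m) (fun m x => r m x))
    (RM : M →ₗ[K] M)
    (hl : ∀ (x : L) (m : M), l (R x) (RM m) = RM (l (R x) m + l x (RM m)))
    (hr : ∀ (x : L) (m : M), r (RM m) (R x) = RM (r (RM m) x + r m (R x))) :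
    IsLeibnizBimodule (fun x y => b (R x) y + b x (R y))
      (fun x m => l (R x) m + l x (RM m))
      (fun m x => r (RM m) x + r m (R x)) :=
  rotaBaxter_bimodule_general (fun x y => b x y) R hR l r hmod RM hl fun m x => hr x m
end

section
/- Let L be a vector space over a field K with two trilinear brackets [-,-,-]₁ and [-,-,-]₂, each making L a ternary Leibniz algebra. Then the pair ([-,-,-]₁, [-,-,-]₂) satisfies the compatibility condition [[x,y,z]₁,t,u]₂ + [[x,y,z]₂,t,u]₁ = [x,y,[z,t,u]₁]₂ + [x,y,[z,t,u]₂]₁ + [x,[y,t,u]₁,z]₂ + [x,[y,t,u]₂,z]₁ + [[x,t,u]₁,y,z]₂ + [[x,t,u]₂,y,z]₁ (for all x,y,z,t,u) if and only if for all scalars k₁, k₂ ∈ K the bracket [x,y,z] := k₁[x,y,z]₁ + k₂[x,y,z]₂ makes L a ternary Leibniz algebra. -/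
variable {K : Type*} [Field K] {L : Type*} [AddCommGroup L] [Module K L]

/-- Compatibility of two ternary brackets. -/
def TernaryCompat (b₁ b₂ : L → L → L → L) : Prop :=
  ∀ x y z t u : L,
    b₂ (b₁ x y z) t u + b₁ (b₂ x y z) t u =
      b₂ x y (b₁ z t u) + b₁ x y (b₂ z t u) + b₂ x (b₁ y t u) z + b₁ x (b₂ y t u) z +
        b₂ (b₁ x t u) y z + b₁ (b₂ x t u) y z

section Polarization

variable {R M : Type*} [CommSemiring R] [AddCommGroup M] [Module R M]

/-- The failure of the ternary Leibniz identity, polarized: the inner bracket `b` and the outer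
bracket `c` are independent arguments, so that the defect is bilinear in `(b, c)` and the identity
for a single bracket `b` says that `ternaryLeibnizDefect b b` vanishes. -/
def ternaryLeibnizDefect :
    (M →ₗ[R] M →ₗ[R] M →ₗ[R] M) →ₗ[R] (M →ₗ[R] M →ₗ[R] M →ₗ[R] M) →ₗ[R]
      (M → M → M → M → M → M) :=
  LinearMap.mk₂ R
    (fun b c x y z t u =>
      c (b x y z) t u - (c x y (b z t u) + c x (b y t u) z + c (b x t u) y z))
    (fun b b' c => by
      funext x y z t u
      simp only [LinearMap.add_apply, map_add, Pi.add_apply]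
      abel)
    (fun k b c => by
      funext x y z t u
      simp only [LinearMap.smul_apply, map_smul, Pi.smul_apply, smul_add, smul_sub])
    (fun b c c' => by
      funext x y z t u
      simp only [LinearMap.add_apply, Pi.add_apply]
      abel)
    (fun k b c => by
      funext x y z t u
      simp only [LinearMap.smul_apply, Pi.smul_apply, smul_add, smul_sub])

theorem ternaryLeibnizDefect_apply (b c : M →ₗ[R] M →ₗ[R] M →ₗ[R] M) (x y z t u : M) :
    ternaryLeibnizDefect b c x y z t u =
      c (b x y z) t u - (c x y (b z t u) + c x (b y t u) z + c (b x t u) y z) :=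
  rfl

theorem ternaryLeibnizId_iff_defect_eq_zero (b : M →ₗ[R] M →ₗ[R] M →ₗ[R] M) :
    TernaryLeibnizId (fun x y z => b x y z) ↔ ternaryLeibnizDefect b b = 0 := by
  simp only [TernaryLeibnizId, funext_iff, ternaryLeibnizDefect_apply, Pi.zero_apply, sub_eq_zero]

theorem ternaryCompat_iff_defect_add_defect_eq_zero (b c : M →ₗ[R] M →ₗ[R] M →ₗ[R] M) :
    TernaryCompat (fun x y z => b x y z) (fun x y z => c x y z) ↔
      ternaryLeibnizDefect b c + ternaryLeibnizDefect c b = 0 := by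
  simp only [TernaryCompat, funext_iff, Pi.add_apply, ternaryLeibnizDefect_apply, Pi.zero_apply]
  refine forall₅_congr fun x y z t u => ?_
  rw [sub_add_sub_comm, sub_eq_zero]
  abel_nf

theorem ternaryLeibnizDefect_linear_combination_self (b c : M →ₗ[R] M →ₗ[R] M →ₗ[R] M)
    (k l : R) :
    ternaryLeibnizDefect (k • b + l • c) (k • b + l • c) =
      (k * k) • ternaryLeibnizDefect b b + (l * l) • ternaryLeibnizDefect c c +
        (k * l) • (ternaryLeibnizDefect b c + ternaryLeibnizDefect c b) := by
  simp only [map_add, map_smul, LinearMap.add_apply, LinearMap.smul_apply]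
  module

theorem ternary_compat_iff_linear_combination_general (b c : M →ₗ[R] M →ₗ[R] M →ₗ[R] M) :
    (TernaryLeibnizId (fun x y z => b x y z) ∧ TernaryLeibnizId (fun x y z => c x y z) ∧
        TernaryCompat (fun x y z => b x y z) (fun x y z => c x y z)) ↔
      ∀ k l : R, TernaryLeibnizId fun x y z => k • b x y z + l • c x y z := by
  have combination_iff (k l : R) :
      TernaryLeibnizId (fun x y z => k • b x y z + l • c x y z) ↔
        (k * k) • ternaryLeibnizDefect b b + (l * l) • ternaryLeibnizDefect c c +
          (k * l) • (ternaryLeibnizDefect b c + ternaryLeibnizDefect c b) = 0 := by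
    rw [← ternaryLeibnizDefect_linear_combination_self]
    exact ternaryLeibnizId_iff_defect_eq_zero (k • b + l • c)
  simp only [combination_iff, ternaryLeibnizId_iff_defect_eq_zero,
    ternaryCompat_iff_defect_add_defect_eq_zero]
  constructor
  · rintro ⟨hb, hc, hbc⟩ k l
    simp only [hb, hc, hbc, smul_zero, add_zero]
  · intro h
    have hb : ternaryLeibnizDefect b b = 0 := by simpa using h 1 0
    have hc : ternaryLeibnizDefect c c = 0 := by simpa using h 0 1
    exact ⟨hb, hc, by simpa [hb, hc] using h 1 1⟩

end Polarization

/-- Two ternary Leibniz brackets satisfy the compatibility condition if and only if every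
linear combination `k₁[-,-,-]₁ + k₂[-,-,-]₂` is again a ternary Leibniz bracket. -/
theorem ternary_compat_iff_linear_combination (t₁ t₂ : L →ₗ[K] L →ₗ[K] L →ₗ[K] L)
    (h₁ : TernaryLeibnizId fun x y z => t₁ x y z)
    (h₂ : TernaryLeibnizId fun x y z => t₂ x y z) :
    TernaryCompat (fun x y z => t₁ x y z) (fun x y z => t₂ x y z) ↔
      ∀ k₁ k₂ : K,
        TernaryLeibnizId fun x y z => k₁ • t₁ x y z + k₂ • t₂ x y z := by
  simpa only [h₁, h₂, true_and] using ternary_compat_iff_linear_combination_general t₁ t₂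
end

section
/- Let (L,[-,-,-]) be a ternary Leibniz algebra over a field K and β : L → L an injective averaging operator. Then the new bracket [x,y,z]_β := [β(x),β(y),z] makes L into a ternary Leibniz algebra. -/
variable {K : Type*} [Field K] {L : Type*} [AddCommGroup L] [Module K L]

/-- An averaging operator on a ternary Leibniz algebra. -/
def IsTernaryAveraging (t : L → L → L → L) (β : L → L) : Prop :=
  ∀ x y z : L,
    β (t (β x) (β y) z) = t (β x) (β y) (β z) ∧
      β (t (β x) y (β z)) = t (β x) (β y) (β z) ∧
      β (t x (β y) (β z)) = t (β x) (β y) (β z)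

theorem TernaryLeibnizId.of_injective {M : Type*} [AddCommGroup M] {b : L → L → L → L}
    {c : M → M → M → M} (hb : TernaryLeibnizId b) (f : M →+ L) (hf : Function.Injective f)
    (map_bracket : ∀ x y z, f (c x y z) = b (f x) (f y) (f z)) : TernaryLeibnizId c := by
  intro x y z t u
  apply hf
  simpa only [map_add, map_bracket] using hb (f x) (f y) (f z) (f t) (f u)

-- The averaging identity `hβ` says exactly that `β` is a homomorphism from the new bracket to `b`.
theorem averaging_ternaryLeibniz_general {b : L → L → L → L} (hb : TernaryLeibnizId b)
    (β : L →+ L) (hinj : Function.Injective β)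
    (hβ : ∀ x y z, β (b (β x) (β y) z) = b (β x) (β y) (β z)) :
    TernaryLeibnizId fun x y z => b (β x) (β y) z :=
  hb.of_injective β hinj hβ

/-- If `β` is an injective averaging operator on a ternary Leibniz algebra `(L, [-,-,-])`,
then `[x,y,z]_β := [β(x),β(y),z]` makes `L` into a ternary Leibniz algebra. -/
theorem averaging_ternaryLeibniz (t : L →ₗ[K] L →ₗ[K] L →ₗ[K] L)
    (ht : TernaryLeibnizId fun x y z => t x y z)
    (β : L →ₗ[K] L) (hinj : Function.Injective β)
    (hav : IsTernaryAveraging (fun x y z => t x y z) β) :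
    TernaryLeibnizId fun x y z => t (β x) (β y) z :=
  averaging_ternaryLeibniz_general ht β.toAddMonoidHom hinj fun x y z => (hav x y z).1
end

section
/- Let L be a vector space over a field K carrying two ternary Leibniz brackets [-,-,-]₁ and [-,-,-]₂, and let β₁ be an injective averaging operator for [-,-,-]₁ and β₂ an injective averaging operator for [-,-,-]₂, such that β₁∘β₂ = β₂∘β₁ and [β₁(x),β₁(y),β₁(z)]₁ = [β₂(x),β₂(y),β₂(z)]₂ for all x,y,z ∈ L. Then the brackets [x,y,z]_{β₁} := [β₁(x),β₁(y),z]₁ and [x,y,z]_{β₂} := [β₂(x),β₂(y),z]₂ are two compatible ternary Leibniz brackets on L. -/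
variable {K : Type*} [Field K] {L : Type*} [AddCommGroup L] [Module K L]

/-!
Write `bᵢ x y z = tᵢ (βᵢ x) (βᵢ y) z`. The averaging identity says that `βᵢ` is a morphism from
`bᵢ` to `tᵢ`, so injectivity pulls the Leibniz identity back from `tᵢ` to `bᵢ`. Together with the
equality of `t₁` after `β₁` and `t₂` after `β₂` it gives `β₁ ∘ b₁ = β₂ ∘ b₂`: applying `β₁` to the
Leibniz identity of `b₁` and then cancelling `β₂` replaces each outer bracket `b₁` by `b₂`. Adding
this mixed identity to the one with the indices exchanged gives compatibility.
-/

/-- The Leibniz identity with inner bracket `b` and outer bracket `c`; compatibility of two brackets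
is the sum of the two mixed identities, and `TernaryLeibnizId b` is the case `c = b`. -/
def MixedTernaryLeibnizId (b c : L → L → L → L) : Prop :=
  ∀ x y z t u : L,
    c (b x y z) t u = c x y (b z t u) + c x (b y t u) z + c (b x t u) y z

theorem TernaryLeibnizId.of_injective_hom {M : Type*} [AddCommGroup M] {b : L → L → L → L}
    {c : M → M → M → M} (hc : TernaryLeibnizId c) (f : L →+ M) (hf : Function.Injective f)
    (map_bracket : ∀ x y z, f (b x y z) = c (f x) (f y) (f z)) :
    TernaryLeibnizId b := by
  intro x y z t u
  apply hf
  simp only [map_add, map_bracket]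
  exact hc (f x) (f y) (f z) (f t) (f u)

theorem TernaryLeibnizId.mixed_of_hom_comp_eq {M : Type*} [AddCommGroup M]
    {b c : L → L → L → L} (hb : TernaryLeibnizId b) (f g : L →+ M) (hg : Function.Injective g)
    (hfg : ∀ x y z, g (c x y z) = f (b x y z)) :
    MixedTernaryLeibnizId b c := by
  intro x y z t u
  apply hg
  calc
    g (c (b x y z) t u) = f (b (b x y z) t u) := hfg _ _ _
    _ = f (b x y (b z t u) + b x (b y t u) z + b (b x t u) y z) := congrArg f (hb x y z t u)
    _ = g (c x y (b z t u) + c x (b y t u) z + c (b x t u) y z) := by simp only [map_add, hfg]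

theorem MixedTernaryLeibnizId.ternaryCompat {b c : L → L → L → L}
    (hbc : MixedTernaryLeibnizId b c) (hcb : MixedTernaryLeibnizId c b) :
    TernaryCompat b c := by
  intro x y z t u
  rw [hbc, hcb]
  abel

theorem averaging_compatible_ternaryLeibniz_general {t₁ t₂ : L → L → L → L}
    (h₁ : TernaryLeibnizId t₁) (h₂ : TernaryLeibnizId t₂) (β₁ β₂ : L →+ L)
    (hinj₁ : Function.Injective β₁) (hinj₂ : Function.Injective β₂)
    (hav₁ : ∀ x y z, β₁ (t₁ (β₁ x) (β₁ y) z) = t₁ (β₁ x) (β₁ y) (β₁ z))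
    (hav₂ : ∀ x y z, β₂ (t₂ (β₂ x) (β₂ y) z) = t₂ (β₂ x) (β₂ y) (β₂ z))
    (heq : ∀ x y z, t₁ (β₁ x) (β₁ y) (β₁ z) = t₂ (β₂ x) (β₂ y) (β₂ z)) :
    TernaryLeibnizId (fun x y z => t₁ (β₁ x) (β₁ y) z) ∧
      TernaryLeibnizId (fun x y z => t₂ (β₂ x) (β₂ y) z) ∧
      TernaryCompat (fun x y z => t₁ (β₁ x) (β₁ y) z)
        (fun x y z => t₂ (β₂ x) (β₂ y) z) := by
  have leibniz₁ := h₁.of_injective_hom β₁ hinj₁ hav₁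
  have leibniz₂ := h₂.of_injective_hom β₂ hinj₂ hav₂
  have images_eq (x y z : L) : β₂ (t₂ (β₂ x) (β₂ y) z) = β₁ (t₁ (β₁ x) (β₁ y) z) := by
    rw [hav₁, hav₂, heq]
  have mixed₁₂ := leibniz₁.mixed_of_hom_comp_eq β₁ β₂ hinj₂ images_eq
  have mixed₂₁ := leibniz₂.mixed_of_hom_comp_eq β₂ β₁ hinj₁ fun x y z => (images_eq x y z).symm
  exact ⟨leibniz₁, leibniz₂, mixed₁₂.ternaryCompat mixed₂₁⟩

/-- Let `β₁` and `β₂` be commuting injective averaging operators for two ternary Leibniz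
brackets `[-,-,-]₁` and `[-,-,-]₂` on `L` with
`[β₁(x),β₁(y),β₁(z)]₁ = [β₂(x),β₂(y),β₂(z)]₂`. Then `[x,y,z]_{βᵢ} := [βᵢ(x),βᵢ(y),z]ᵢ`
are two compatible ternary Leibniz brackets on `L`. -/
theorem averaging_compatible_ternaryLeibniz (t₁ t₂ : L →ₗ[K] L →ₗ[K] L →ₗ[K] L)
    (h₁ : TernaryLeibnizId fun x y z => t₁ x y z)
    (h₂ : TernaryLeibnizId fun x y z => t₂ x y z)
    (β₁ β₂ : L →ₗ[K] L)
    (hinj₁ : Function.Injective β₁) (hinj₂ : Function.Injective β₂)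
    (hav₁ : IsTernaryAveraging (fun x y z => t₁ x y z) β₁)
    (hav₂ : IsTernaryAveraging (fun x y z => t₂ x y z) β₂)
    (hcomm : β₁ ∘ₗ β₂ = β₂ ∘ₗ β₁)
    (heq : ∀ x y z : L, t₁ (β₁ x) (β₁ y) (β₁ z) = t₂ (β₂ x) (β₂ y) (β₂ z)) :
    TernaryLeibnizId (fun x y z => t₁ (β₁ x) (β₁ y) z) ∧
      TernaryLeibnizId (fun x y z => t₂ (β₂ x) (β₂ y) z) ∧
      TernaryCompat (fun x y z => t₁ (β₁ x) (β₁ y) z)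
        (fun x y z => t₂ (β₂ x) (β₂ y) z) :=
  averaging_compatible_ternaryLeibniz_general h₁ h₂ β₁.toAddMonoidHom β₂.toAddMonoidHom hinj₁ hinj₂
    (fun x y z => (hav₁ x y z).1) (fun x y z => (hav₂ x y z).1) heq
end

section
/- Let (L,[-,-,-]) be a ternary Leibniz algebra over a field K and R : L → L a Rota-Baxter operator of weight 0, i.e. [R(x),R(y),R(z)] = R([R(x),R(y),z] + [R(x),y,R(z)] + [x,R(y),R(z)]) for all x,y,z ∈ L. Then the bracket {x,y,z} := [R(x),R(y),z] + [R(x),y,R(z)] + [x,R(y),R(z)] makes L into a ternary Leibniz algebra. -/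
variable {K : Type*} [Field K] {L : Type*} [AddCommGroup L] [Module K L]

/-!
Over the dual numbers the bracket of `L` extends to `L[ε]`, and the `ε`-coefficient of
`[R x + ε x, R y + ε y, R z + ε z]` is `{x, y, z}`. The Rota-Baxter identity says exactly that the
graph `{R x + ε x}` is closed under the bracket of `L[ε]`, so `{-, -, -}` is the bracket of `L[ε]`
restricted to the graph and inherits its Leibniz identity.
-/

theorem TernaryLeibnizId.of_leftInverse {M : Type*} [AddCommGroup M]
    {b : L → L → L → L} {c : M → M → M → M} (hc : TernaryLeibnizId c)
    {f : L → M} {g : M →+ L} (hgf : Function.LeftInverse g f)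
    (hf : ∀ x y z, f (b x y z) = c (f x) (f y) (f z)) : TernaryLeibnizId b := by
  intro x y z v w
  have hg : ∀ x y z, b x y z = g (c (f x) (f y) (f z)) := fun x y z => by rw [← hf, hgf]
  calc b (b x y z) v w
      = g (c (c (f x) (f y) (f z)) (f v) (f w)) := by rw [hg, hf]
    _ = g (c (f x) (f y) (c (f z) (f v) (f w)) + c (f x) (c (f y) (f v) (f w)) (f z) +
          c (c (f x) (f v) (f w)) (f y) (f z)) := by rw [hc]
    _ = b x y (b z v w) + b x (b y v w) z + b (b x v w) y z := by
        simp only [map_add, ← hf, hgf _]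

section DualNumbers

variable {A : Type*} [CommSemiring A] [Module A L]

/-- The extension of a ternary bracket on `L` to the dual numbers `L[ε]` with `ε ^ 2 = 0`, where
the pair `(a, x)` encodes `a + ε x`. -/
def dualNumberBracket (t : L →ₗ[A] L →ₗ[A] L →ₗ[A] L) (p q r : L × L) : L × L :=
  (t p.1 q.1 r.1, t p.1 q.1 r.2 + t p.1 q.2 r.1 + t p.2 q.1 r.1)

theorem TernaryLeibnizId.dualNumberBracket {t : L →ₗ[A] L →ₗ[A] L →ₗ[A] L}
    (ht : TernaryLeibnizId fun x y z => t x y z) :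
    TernaryLeibnizId (dualNumberBracket t) := by
  rintro ⟨a, x⟩ ⟨b, y⟩ ⟨c, z⟩ ⟨d, v⟩ ⟨e, w⟩
  have leibniz : ∀ x y z v w : L,
      t (t x y z) v w = t x y (t z v w) + t x (t y v w) z + t (t x v w) y z := ht
  refine Prod.ext (leibniz a b c d e) ?_
  -- The `ε`-coefficient is the sum of the five identities with one argument replaced.
  simp only [_root_.dualNumberBracket, Prod.snd_add, map_add, LinearMap.add_apply]
  rw [leibniz a b c d w, leibniz a b c v e, leibniz a b z d e, leibniz a y c d e,
    leibniz x b c d e]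
  abel

theorem rotaBaxter_ternaryLeibniz_general (t : L →ₗ[A] L →ₗ[A] L →ₗ[A] L)
    (ht : TernaryLeibnizId fun x y z => t x y z)
    (R : L → L)
    (hR : ∀ x y z : L,
      t (R x) (R y) (R z) =
        R (t (R x) (R y) z + t (R x) y (R z) + t x (R y) (R z))) :
    TernaryLeibnizId fun x y z =>
      t (R x) (R y) z + t (R x) y (R z) + t x (R y) (R z) :=
  ht.dualNumberBracket.of_leftInverse (f := fun x => (R x, x)) (g := AddMonoidHom.snd L L)
    (fun _ => rfl) (fun x y z => Prod.ext (hR x y z).symm rfl)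

end DualNumbers

/-- If `R` is a Rota-Baxter operator of weight `0` on a ternary Leibniz algebra
`(L, [-,-,-])`, then `{x,y,z} := [R(x),R(y),z] + [R(x),y,R(z)] + [x,R(y),R(z)]` makes `L`
into a ternary Leibniz algebra. -/
theorem rotaBaxter_ternaryLeibniz (t : L →ₗ[K] L →ₗ[K] L →ₗ[K] L)
    (ht : TernaryLeibnizId fun x y z => t x y z)
    (R : L →ₗ[K] L)
    (hR : ∀ x y z : L,
      t (R x) (R y) (R z) =
        R (t (R x) (R y) z + t (R x) y (R z) + t x (R y) (R z))) :
    TernaryLeibnizId fun x y z =>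
      t (R x) (R y) z + t (R x) y (R z) + t x (R y) (R z) :=
  rotaBaxter_ternaryLeibniz_general t ht R hR
end
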